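/- arXiv:2105.09117 — 11 statements merged into one kernel-verified Lean document; each statement's English description precedes it below -/
import Mathlib

section
/- Let G be a group containing an element k of infinite order. Then G is a J-group with constant k; that is, there exists a function f : G → G such that f(x·k) = x·f(x) holds for all x ∈ G. -/
/-!
A map `f` with `f (σ x) = a x (f x)` is the same thing as a section `x ↦ (x, f x)` of `Prod.fst`
that intertwines `σ` with the shear `(x, y) ↦ (σ x, a x y)`. If `σ` has only infinite orbits,
it acts on each of them as `n ↦ n + 1` on `ℤ`, so such a section can be chosen freely at one point
of each orbit and extended along the orbit by the powers of the shear. Right multiplication by an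
element of infinite order is such a `σ`.
-/

open Equiv Function

section

variable {X Y Z : Type*}

theorem semiconj_perm_zpow {π : Z → X} {τ : Perm Z} {σ : Perm X} (h : Semiconj π τ σ) :
    ∀ n : ℤ, Semiconj π ⇑(τ ^ n) ⇑(σ ^ n)
  | (n : ℕ) => by simpa only [zpow_natCast, Perm.coe_pow] using h.iterate_right n
  | .negSucc n => by
    have hpow : Semiconj π ⇑(τ ^ (n + 1)) ⇑(σ ^ (n + 1)) := by
      simpa only [Perm.coe_pow] using h.iterate_right (n + 1)
    simpa only [zpow_negSucc, Perm.inv_def] using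
      hpow.inverses_right (τ ^ (n + 1)).apply_symm_apply (σ ^ (n + 1)).symm_apply_apply

theorem exists_sameCycle_representative (σ : Perm X) :
    ∃ r : X → X, (∀ x, σ.SameCycle (r x) x) ∧ ∀ x, r (σ x) = r x := by
  let orbit : X → Quotient (Perm.SameCycle.setoid σ) := Quotient.mk _
  have horbit (x : X) : orbit (σ x) = orbit x :=
    Quotient.sound (Perm.sameCycle_apply_left.2 (.refl σ x))
  exact ⟨fun x => (orbit x).out, fun x => Quotient.exact (orbit x).out_eq,
    fun x => congrArg Quotient.out (horbit x)⟩

theorem exists_int_orbit_coordinate {σ : Perm X}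
    (hσ : ∀ x, Injective fun n : ℤ => (σ ^ n) x) :
    ∃ (r : X → X) (e : X → ℤ), (∀ x, (σ ^ e x) (r x) = x) ∧
      (∀ x, r (σ x) = r x) ∧ ∀ x, e (σ x) = e x + 1 := by
  obtain ⟨r, hr, hrσ⟩ := exists_sameCycle_representative σ
  choose e he using hr
  refine ⟨r, e, he, hrσ, fun x => hσ (r x) ?_⟩
  calc (σ ^ e (σ x)) (r x) = (σ ^ e (σ x)) (r (σ x)) := by rw [hrσ]
    _ = σ x := he (σ x)
    _ = σ ((σ ^ e x) (r x)) := by rw [he]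
    _ = (σ ^ (e x + 1)) (r x) := by rw [add_comm, zpow_one_add, Perm.mul_apply]

theorem exists_rightInverse_semiconj {σ : Perm X} {τ : Perm Z} {π : Z → X}
    (hσ : ∀ x, Injective fun n : ℤ => (σ ^ n) x) (hπ : Surjective π) (h : Semiconj π τ σ) :
    ∃ s : X → Z, RightInverse s π ∧ Semiconj s σ τ := by
  obtain ⟨r, e, he, hr, hadd⟩ := exists_int_orbit_coordinate hσ
  obtain ⟨lift, hlift⟩ := hπ.hasRightInverse
  refine ⟨fun x => (τ ^ e x) (lift (r x)), fun x => ?_, fun x => ?_⟩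
  · rw [semiconj_perm_zpow h, hlift, he]
  · simp only [hr, hadd, add_comm (e x), zpow_one_add, Perm.mul_apply]

theorem injective_mulRight_zpow_apply {G : Type*} [Group G] {k : G} (hk : ¬ IsOfFinOrder k)
    (x : G) : Injective fun n : ℤ => (Equiv.mulRight k ^ n) x := by
  simpa only [zpow_mulRight, coe_mulRight, comp_def] using
    (mul_right_injective x).comp (injective_zpow_iff_not_isOfFinOrder.2 hk)

theorem infinite_order_element_isJGroup_general [Nonempty Y] {σ : Perm X}
    (hσ : ∀ x, Injective fun n : ℤ => (σ ^ n) x) (a : X → Perm Y) :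
    ∃ f : X → Y, ∀ x, f (σ x) = a x (f x) := by
  have hfst : Semiconj Prod.fst (prodShear σ a) σ := fun _ => rfl
  obtain ⟨s, hsection, hs⟩ := exists_rightInverse_semiconj hσ Prod.fst_surjective hfst
  refine ⟨fun x => (s x).2, fun x => ?_⟩
  calc (s (σ x)).2 = (prodShear σ a (s x)).2 := by rw [hs]
    _ = a (s x).1 (s x).2 := rfl
    _ = a x (s x).2 := by rw [hsection]

end

/-- If a group `G` has an element `k` of infinite order, then `G` is a `J`-group
with constant `k`: there is a function `f : G → G` with `f (x * k) = x * f x`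
for all `x`. -/
theorem infinite_order_element_isJGroup {G : Type*} [Group G] (k : G)
    (hk : ¬ IsOfFinOrder k) :
    ∃ f : G → G, ∀ x : G, f (x * k) = x * f x :=
  infinite_order_element_isJGroup_general (injective_mulRight_zpow_apply hk) Equiv.mulLeft
end

section
/- Let G be a torsion group (every element has finite order). Then G is a J-group if and only if there exists k ∈ G such that, writing n for the order of k, the ordered product (x·k^{n-1})·(x·k^{n-2})⋯(x·k^{1})·(x·k^{0}) equals the identity for all x ∈ G. -/
/-!
The equation `f (x * k) = x * f x` says that the graph of `f` is invariant under the permutation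
`(x, y) ↦ (x * k, x * y)` of `G × G`, which lies over the right translation by `k`. An invariant
section can be prescribed at one point of each orbit of the base, and transporting it along the
orbit is consistent exactly when going once around a finite orbit brings the chosen point back to
itself. The orbits of the translation all have length `orderOf k`, and going around the orbit of
`x` multiplies the second coordinate by `(x * k ^ (n - 1)) * ⋯ * (x * k) * x`.
-/

open Function Equiv

section InvariantSection

variable {E B : Type*} {φ : Perm E} {σ : Perm B} {π : E → B}

theorem zpow_apply_eq_of_minimalPeriod_dvd {b : B} {e : E}
    (hdvd : minimalPeriod φ e ∣ minimalPeriod σ b) {i j : ℤ} (hij : (σ ^ i) b = (σ ^ j) b) :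
    (φ ^ i) e = (φ ^ j) e := by
  have hσ : σ ^ (-j + i) • b = b := by
    rw [zpow_add, mul_smul, Perm.smul_def (σ ^ i), hij, zpow_neg]
    exact inv_smul_smul (σ ^ j) b
  have hφ : φ ^ (-j + i) • e = e :=
    MulAction.zpow_smul_eq_iff_minimalPeriod_dvd.2 <|
      (Int.natCast_dvd_natCast.2 hdvd).trans (MulAction.zpow_smul_eq_iff_minimalPeriod_dvd.1 hσ)
  rwa [zpow_add, mul_smul, zpow_neg, inv_smul_eq_iff] at hφ

theorem semiconj_zpow (h : Semiconj π φ σ) (m : ℤ) :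
    Semiconj π (φ ^ m : Perm E) (σ ^ m : Perm B) := by
  have hpow (n : ℕ) : Semiconj π (φ ^ n : Perm E) (σ ^ n : Perm B) := by
    simpa only [Perm.iterate_eq_pow] using h.iterate_right n
  obtain ⟨n, rfl | rfl⟩ := m.eq_nat_or_neg
  · simpa only [zpow_natCast] using hpow n
  · rw [zpow_neg, zpow_neg, zpow_natCast, zpow_natCast]
    exact (hpow n).inverses_right (φ ^ n).right_inv (σ ^ n).left_inv

theorem exists_semiconj_section_iff (hπ : Semiconj π φ σ) :
    (∃ s : B → E, RightInverse s π ∧ Semiconj s σ φ) ↔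
      ∀ b, ∃ e, π e = b ∧ minimalPeriod φ e ∣ minimalPeriod σ b := by
  constructor
  · rintro ⟨s, hs, hsσ⟩ b
    exact ⟨s b, hs b, ((isPeriodicPt_minimalPeriod σ b).map hsσ).minimalPeriod_dvd⟩
  · intro h
    choose e he hdvd using h
    let rep (b : B) : B := (Quotient.mk (Perm.SameCycle.setoid σ) b).out
    have rep_sameCycle (b : B) : σ.SameCycle (rep b) b :=
      Quotient.mk_out (s := Perm.SameCycle.setoid σ) b
    have rep_apply (b : B) : rep (σ b) = rep b :=
      congrArg Quotient.out (Quotient.sound (Perm.sameCycle_apply_left.2 (.refl σ b)))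
    choose time htime using rep_sameCycle
    refine ⟨fun b ↦ (φ ^ time b) (e (rep b)), fun b ↦ ?_, fun b ↦ ?_⟩
    · rw [semiconj_zpow hπ, he, htime]
    · have hreturn : (σ ^ time (σ b)) (rep b) = (σ ^ (1 + time b)) (rep b) := by
        rw [zpow_one_add, Perm.mul_apply, htime, ← rep_apply, htime]
      calc
        (φ ^ time (σ b)) (e (rep (σ b))) = (φ ^ time (σ b)) (e (rep b)) := by rw [rep_apply]
        _ = (φ ^ (1 + time b)) (e (rep b)) :=
          zpow_apply_eq_of_minimalPeriod_dvd (hdvd _) hreturn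
        _ = φ ((φ ^ time b) (e (rep b))) := by rw [zpow_one_add, Perm.mul_apply]

end InvariantSection

section CohomologicalEquation

variable {α M H : Type*}

/-- The ordered Birkhoff product `c (T^[n - 1] a) * ⋯ * c (T a) * c a` of `c` along the first `n`
points of the orbit of `a`, a noncommutative multiplicative analogue of `birkhoffSum`. Later points
stand further to the left. -/
def orderedBirkhoffProd [Monoid M] (T : α → α) (c : α → M) (n : ℕ) (a : α) : M :=
  ((List.range n).reverse.map fun i ↦ c (T^[i] a)).prod

theorem orderedBirkhoffProd_succ [Monoid M] (T : α → α) (c : α → M) (n : ℕ) (a : α) :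
    orderedBirkhoffProd T c (n + 1) a = c (T^[n] a) * orderedBirkhoffProd T c n a := by
  simp [orderedBirkhoffProd, List.range_succ]

variable [Group H]

/-- The skew product `(a, h) ↦ (σ a, c a * h)` over `σ` with cocycle `c`. Its invariant sections
are the graphs of the solutions `f` of the cohomological equation `f (σ a) = c a * f a`. -/
def skewProduct (σ : Perm α) (c : α → H) : Perm (α × H) :=
  σ.prodShear fun a ↦ Equiv.mulLeft (c a)

theorem skewProduct_apply (σ : Perm α) (c : α → H) (p : α × H) :
    skewProduct σ c p = (σ p.1, c p.1 * p.2) :=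
  rfl

theorem skewProduct_iterate_apply (σ : Perm α) (c : α → H) (n : ℕ) (a : α) (h : H) :
    (skewProduct σ c)^[n] (a, h) = (σ^[n] a, orderedBirkhoffProd σ c n a * h) := by
  induction n with
  | zero => simp [orderedBirkhoffProd]
  | succ n ih =>
    rw [iterate_succ_apply', ih, skewProduct_apply, iterate_succ_apply', orderedBirkhoffProd_succ,
      mul_assoc]

theorem minimalPeriod_skewProduct_dvd_iff (σ : Perm α) (c : α → H) (a : α) (h : H) :
    minimalPeriod (skewProduct σ c) (a, h) ∣ minimalPeriod σ a ↔
      orderedBirkhoffProd σ c (minimalPeriod σ a) a = 1 := by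
  rw [← isPeriodicPt_iff_minimalPeriod_dvd, IsPeriodicPt, IsFixedPt, skewProduct_iterate_apply,
    iterate_minimalPeriod, Prod.mk_right_inj, mul_eq_right]

theorem exists_apply_perm_eq_mul_iff_exists_section (σ : Perm α) (c : α → H) :
    (∃ f : α → H, ∀ a, f (σ a) = c a * f a) ↔
      ∃ s : α → α × H, RightInverse s Prod.fst ∧ Semiconj s σ (skewProduct σ c) := by
  constructor
  · rintro ⟨f, hf⟩
    exact ⟨fun a ↦ (a, f a), fun _ ↦ rfl, fun a ↦ Prod.ext rfl (hf a)⟩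
  · rintro ⟨s, hs, hsσ⟩
    refine ⟨fun a ↦ (s a).2, fun a ↦ ?_⟩
    calc
      (s (σ a)).2 = c (s a).1 * (s a).2 := congrArg Prod.snd (hsσ a)
      _ = c a * (s a).2 := by rw [hs a]

theorem exists_apply_perm_eq_mul_iff (σ : Perm α) (c : α → H) :
    (∃ f : α → H, ∀ a, f (σ a) = c a * f a) ↔
      ∀ a, orderedBirkhoffProd σ c (minimalPeriod σ a) a = 1 := by
  have hfst : Semiconj Prod.fst (skewProduct σ c) σ := fun _ ↦ rfl
  rw [exists_apply_perm_eq_mul_iff_exists_section, exists_semiconj_section_iff hfst]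
  simp [minimalPeriod_skewProduct_dvd_iff]

end CohomologicalEquation

section RightTranslation

variable {G : Type*} [Group G]

theorem minimalPeriod_mulRight (k x : G) : minimalPeriod (Equiv.mulRight k) x = orderOf k := by
  refine minimalPeriod_eq_minimalPeriod_iff.2 fun n ↦ ?_
  rw [isPeriodicPt_mul_iff_pow_eq_one, IsPeriodicPt, IsFixedPt, Equiv.coe_mulRight,
    mul_right_iterate, mul_eq_left]

theorem orderedBirkhoffProd_mulRight_id (k : G) (n : ℕ) (x : G) :
    orderedBirkhoffProd (Equiv.mulRight k) id n x =
      ((List.range n).map fun i ↦ x * k ^ (n - 1 - i)).prod := by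
  have hrev : (List.range n).reverse = (List.range n).map (n - 1 - ·) := by
    simpa only [Nat.zero_add, List.range_eq_range'] using List.reverse_range' (s := 0) (n := n)
  simp [orderedBirkhoffProd, hrev, Function.comp_def]

end RightTranslation

-- If `k` has infinite order, then `orderOf k = 0`, so the product is empty; accordingly `k` acts
-- freely on `G`, and `f` can be built along each infinite orbit.
theorem torsion_isJGroup_iff_witness_general {G : Type*} [Group G] (k : G) :
    (∃ f : G → G, ∀ x, f (x * k) = x * f x) ↔
      ∀ x : G, ((List.range (orderOf k)).map fun i ↦ x * k ^ (orderOf k - 1 - i)).prod = 1 :=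
  (exists_apply_perm_eq_mul_iff (Equiv.mulRight k) id).trans <| by
    simp only [minimalPeriod_mulRight, orderedBirkhoffProd_mulRight_id]

/-- A torsion group `G` is a `J`-group if and only if there is `k ∈ G` such that,
with `n = orderOf k`, the ordered product `(x * k^(n-1)) * (x * k^(n-2)) * ⋯ * x`
equals `1` for all `x ∈ G`. -/
theorem torsion_isJGroup_iff_witness {G : Type*} [Group G]
    (hG : ∀ g : G, IsOfFinOrder g) :
    (∃ (k : G) (f : G → G), ∀ x : G, f (x * k) = x * f x) ↔
      (∃ k : G, ∀ x : G,
        ((List.range (orderOf k)).map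
          (fun i => x * k ^ (orderOf k - 1 - i))).prod = 1) :=
  exists_congr torsion_isJGroup_iff_witness_general
end

section
/- Every finite J-group has odd order. -/
/-!
Let `f (x * k) = x • f x` for all `x`, where `k` has finite order and the action is free. If
`x² = 1`, running the equation forwards and backwards from `x` gives the reflection identity
`f (x * k⁻ⁱ) = kⁱ • f (x * kⁱ)`. If `k` had order `2m`, then taking `x = 1` and `i = m` we would
see `kᵐ` fix a point. So `k` has order `2m + 1`, and `i = m` gives
`kᵐ • f (x * kᵐ) = f (x * kᵐ⁺¹) = x • kᵐ • f (x * kᵐ)`, whence `x = 1`: no element has order two.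
-/

theorem odd_card_of_forall_odd_orderOf {G : Type*} [Group G] [Fintype G]
    (h : ∀ x : G, Odd (orderOf x)) : Odd (Fintype.card G) := by
  by_contra hodd
  obtain ⟨x, hx⟩ :=
    exists_prime_orderOf_dvd_card 2 (Nat.not_odd_iff_even.mp hodd).two_dvd
  exact Nat.not_odd_iff_even.mpr even_two (hx ▸ h x)

theorem inv_pow_eq_pow_of_add_eq_orderOf {G : Type*} [Group G] {g : G} {i j : ℕ}
    (h : i + j = orderOf g) : (g ^ i)⁻¹ = g ^ j :=
  inv_eq_of_mul_eq_one_right (by rw [← pow_add, h, pow_orderOf_eq_one])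

section ShiftEquation

variable {G X : Type*} [Group G] [MulAction G X] {k : G} {f : G → X}

theorem apply_mul_inv_pow_eq_pow_smul (hf : ∀ x : G, f (x * k) = x • f x) {x : G}
    (hx : x * x = 1) (i : ℕ) : f (x * (k ^ i)⁻¹) = k ^ i • f (x * k ^ i) := by
  induction i with
  | zero => simp only [pow_zero, inv_one, mul_one, one_smul]
  | succ i ih =>
    have backward : f (x * (k ^ i)⁻¹) = (x * (k ^ (i + 1))⁻¹) • f (x * (k ^ (i + 1))⁻¹) := by
      rw [← hf]
      congr 1
      group
    have forward : f (x * k ^ (i + 1)) = (x * k ^ i) • f (x * k ^ i) := by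
      rw [← hf, mul_assoc, ← pow_succ]
    calc f (x * (k ^ (i + 1))⁻¹)
        = (x * (k ^ (i + 1))⁻¹)⁻¹ • f (x * (k ^ i)⁻¹) := eq_inv_smul_iff.mpr backward.symm
      _ = (k ^ (i + 1) * x) • k ^ i • f (x * k ^ i) := by
        rw [ih, mul_inv_rev, inv_inv, inv_eq_of_mul_eq_one_left hx]
      _ = k ^ (i + 1) • f (x * k ^ (i + 1)) := by simp only [forward, mul_smul]

variable [IsCancelSMul G X]

theorem odd_orderOf_of_apply_mul_eq_smul (hf : ∀ x : G, f (x * k) = x • f x)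
    (hk : IsOfFinOrder k) : Odd (orderOf k) := by
  by_contra hodd
  obtain ⟨m, hm⟩ := (Nat.not_odd_iff_even.mp hodd).two_dvd
  have inv_eq : (k ^ m)⁻¹ = k ^ m := inv_pow_eq_pow_of_add_eq_orderOf (by omega)
  have fixed : f (k ^ m) = k ^ m • f (k ^ m) := by
    simpa only [one_mul, inv_eq] using apply_mul_inv_pow_eq_pow_smul hf (one_mul (1 : G)) m
  have pow_eq_one : k ^ m = 1 := IsCancelSMul.eq_one_of_smul fixed.symm
  have hpos : 0 < orderOf k := hk.orderOf_pos
  have hle : orderOf k ≤ m := orderOf_le_of_pow_eq_one (by omega) pow_eq_one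
  omega

theorem eq_one_of_mul_self_eq_one_of_apply_mul_eq_smul (hf : ∀ x : G, f (x * k) = x • f x)
    (hk : Odd (orderOf k)) {x : G} (hx : x * x = 1) : x = 1 := by
  obtain ⟨m, hm⟩ := hk
  have inv_eq : (k ^ m)⁻¹ = k ^ (m + 1) := inv_pow_eq_pow_of_add_eq_orderOf (by omega)
  have fixed : x • k ^ m • f (x * k ^ m) = k ^ m • f (x * k ^ m) :=
    calc x • k ^ m • f (x * k ^ m)
        = f (x * (k ^ m)⁻¹) := by rw [inv_eq, pow_succ, ← mul_assoc, hf, mul_smul]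
      _ = k ^ m • f (x * k ^ m) := apply_mul_inv_pow_eq_pow_smul hf hx m
  exact IsCancelSMul.eq_one_of_smul fixed

theorem finite_jGroup_odd_order_general (hf : ∀ x : G, f (x * k) = x • f x)
    (hk : IsOfFinOrder k) {x : G} (hx : IsOfFinOrder x) : Odd (orderOf x) := by
  by_contra hodd
  have order_two : orderOf (x ^ (orderOf x / 2)) = 2 :=
    orderOf_pow_orderOf_div hx.orderOf_pos.ne' (Nat.not_odd_iff_even.mp hodd).two_dvd
  obtain ⟨sq_eq_one, ne_one⟩ := orderOf_eq_prime_iff.mp order_two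
  exact ne_one <| eq_one_of_mul_self_eq_one_of_apply_mul_eq_smul hf
    (odd_orderOf_of_apply_mul_eq_smul hf hk) ((sq _).symm.trans sq_eq_one)

end ShiftEquation

/-- Every finite `J`-group has odd order. -/
theorem finite_jGroup_odd_order {G : Type*} [Group G] [Fintype G]
    (h : ∃ (k : G) (f : G → G), ∀ x : G, f (x * k) = x * f x) :
    Odd (Fintype.card G) := by
  obtain ⟨k, f, hf⟩ := h
  exact odd_card_of_forall_odd_orderOf fun x =>
    finite_jGroup_odd_order_general hf (isOfFinOrder_of_finite k) (isOfFinOrder_of_finite x)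
end

section
/- For any group G, the following four conditions are equivalent: (1) there exist k ∈ G and f : G → G with f(x·k) = x·f(x) for all x ∈ G; (2) there exist k ∈ G and f : G → G with f(x·k) = f(x)·x for all x ∈ G; (3) there exist k ∈ G and f : G → G with f(k·x) = x·f(x) for all x ∈ G; (4) there exist k ∈ G and f : G → G with f(k·x) = f(x)·x for all x ∈ G. -/
/-! If `f (σ a) = u a * f a`, then `g a = (f (σ a))⁻¹` satisfies `g (σ⁻¹ a) = (f a)⁻¹ = g a * u a`.
For `σ` a translation by `k` and `u = id` this replaces `k` by `k⁻¹` on the same side and moves the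
factor `x` to the other side of `f x`. Conjugating `f` by inversion also replaces `k` by `k⁻¹`, but
switches both sides. -/

theorem exists_apply_perm_eq_mul_iff_exists_apply_symm_eq_mul {α G : Type*} [Group G]
    (σ : Equiv.Perm α) (u : α → G) :
    (∃ f : α → G, ∀ a, f (σ a) = u a * f a) ↔ ∃ f : α → G, ∀ a, f (σ.symm a) = f a * u a := by
  constructor
  · rintro ⟨f, hf⟩
    refine ⟨fun a => (f (σ a))⁻¹, fun a => ?_⟩
    calc (f (σ (σ.symm a)))⁻¹ = (f a)⁻¹ := by rw [σ.apply_symm_apply]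
      _ = (u a * f a)⁻¹ * u a := by group
      _ = (f (σ a))⁻¹ * u a := by rw [hf]
  · rintro ⟨f, hf⟩
    refine ⟨fun a => (f (σ.symm a))⁻¹, fun a => ?_⟩
    calc (f (σ.symm (σ a)))⁻¹ = (f a)⁻¹ := by rw [σ.symm_apply_apply]
      _ = u a * (f a * u a)⁻¹ := by group
      _ = u a * (f (σ.symm a))⁻¹ := by rw [hf]

theorem exists_apply_mul_right_eq_mul_iff_exists_apply_inv_mul_eq_mul {M : Type*}
    [DivisionMonoid M] (k : M) :
    (∃ f : M → M, ∀ x, f (x * k) = x * f x) ↔ ∃ f : M → M, ∀ x, f (k⁻¹ * x) = f x * x := by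
  constructor
  · rintro ⟨f, hf⟩
    refine ⟨fun x => (f x⁻¹)⁻¹, fun x => ?_⟩
    calc (f (k⁻¹ * x)⁻¹)⁻¹ = (f (x⁻¹ * k))⁻¹ := by rw [mul_inv_rev, inv_inv]
      _ = (x⁻¹ * f x⁻¹)⁻¹ := by rw [hf]
      _ = (f x⁻¹)⁻¹ * x := by rw [mul_inv_rev, inv_inv]
  · rintro ⟨f, hf⟩
    refine ⟨fun x => (f x⁻¹)⁻¹, fun x => ?_⟩
    calc (f (x * k)⁻¹)⁻¹ = (f (k⁻¹ * x⁻¹))⁻¹ := by rw [mul_inv_rev]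
      _ = (f x⁻¹ * x⁻¹)⁻¹ := by rw [hf]
      _ = x * (f x⁻¹)⁻¹ := by rw [mul_inv_rev, inv_inv]

/-- The four possible defining functional equations for a `J`-group are
equivalent for any group `G`. -/
theorem jGroup_four_definitions_tfae {G : Type*} [Group G] :
    List.TFAE
      [∃ (k : G) (f : G → G), ∀ x : G, f (x * k) = x * f x,
       ∃ (k : G) (f : G → G), ∀ x : G, f (x * k) = f x * x,
       ∃ (k : G) (f : G → G), ∀ x : G, f (k * x) = x * f x,
       ∃ (k : G) (f : G → G), ∀ x : G, f (k * x) = f x * x] := by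
  tfae_have 1 ↔ 2 := (Equiv.inv G).exists_congr fun k =>
    exists_apply_perm_eq_mul_iff_exists_apply_symm_eq_mul (Equiv.mulRight k) id
  tfae_have 3 ↔ 4 := (Equiv.inv G).exists_congr fun k =>
    exists_apply_perm_eq_mul_iff_exists_apply_symm_eq_mul (Equiv.mulLeft k) id
  tfae_have 1 ↔ 4 := (Equiv.inv G).exists_congr
    exists_apply_mul_right_eq_mul_iff_exists_apply_inv_mul_eq_mul
  tfae_finish
end

section
/- Let G₁ and G₂ be finite groups. If k₁ is a witness for G₁ and k₂ is a witness for G₂, then (k₁, k₂) is a witness for the direct product G₁ × G₂. Moreover, if the orders |G₁| and |G₂| are coprime, then conversely every witness of G₁ × G₂ has the form (k₁, k₂) with k₁ a witness for G₁ and k₂ a witness for G₂; that is, W(G₁) × W(G₂) = W(G₁ × G₂) when gcd(|G₁|, |G₂|) = 1. -/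
/-- An element `k` of finite order `n` in a group `G` is a *witness* if the ordered
product `(x * k^(n-1)) * (x * k^(n-2)) * ⋯ * x` equals `1` for all `x ∈ G`. -/
def IsWitness {G : Type*} [Group G] (k : G) : Prop :=
  IsOfFinOrder k ∧ ∀ x : G,
    ((List.range (orderOf k)).map (fun i => x * k ^ (orderOf k - 1 - i))).prod = 1

/-!
The length `n * m` version of the product defining a witness is the `m`-th power of the length `n`
version as soon as `k ^ n = 1`. The order of `(k₁, k₂)` is a multiple of both orders, so the
component products in `G₁ × G₂` are powers of the products for `k₁` and `k₂`. When element orders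
are coprime across the factors, these exponents are the order of the other component, and an
element killed by an exponent coprime to its order is trivial.
-/

section DescendingProd

variable {M N : Type*} [Monoid M] [Monoid N]

/-- The product `(x * k ^ (n - 1)) * (x * k ^ (n - 2)) * ⋯ * x` of the definition of a witness,
with its length `n` independent of the order of `k`. -/
def descendingProd (k x : M) (n : ℕ) : M :=
  ((List.range n).map fun i => x * k ^ (n - 1 - i)).prod

theorem descendingProd_zero (k x : M) : descendingProd k x 0 = 1 :=
  rfl

theorem descendingProd_succ (k x : M) (n : ℕ) :
    descendingProd k x (n + 1) = x * k ^ n * descendingProd k x n := by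
  simp only [descendingProd, List.prod_range_succ', Nat.add_sub_cancel, Nat.sub_zero,
    Nat.succ_eq_add_one, Nat.sub_add_eq, Nat.sub_right_comm]

theorem map_descendingProd (f : M →* N) (k x : M) (n : ℕ) :
    f (descendingProd k x n) = descendingProd (f k) (f x) n := by
  simp only [descendingProd, map_list_prod, List.map_map, Function.comp_def, map_mul, map_pow]

theorem descendingProd_add_of_pow_eq_one {k : M} {n : ℕ} (hk : k ^ n = 1) (x : M) (m : ℕ) :
    descendingProd k x (m + n) = descendingProd k x m * descendingProd k x n := by
  induction m with
  | zero => rw [Nat.zero_add, descendingProd_zero, one_mul]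
  | succ m ih =>
    rw [Nat.add_right_comm, descendingProd_succ, ih, descendingProd_succ, pow_add, hk, mul_one,
      ← mul_assoc]

theorem descendingProd_mul_of_pow_eq_one {k : M} {n : ℕ} (hk : k ^ n = 1) (x : M) (m : ℕ) :
    descendingProd k x (n * m) = descendingProd k x n ^ m := by
  induction m with
  | zero => rw [Nat.mul_zero, descendingProd_zero, pow_zero]
  | succ m ih => rw [Nat.mul_succ, descendingProd_add_of_pow_eq_one hk, ih, pow_succ]

end DescendingProd

theorem isWitness_iff_descendingProd_eq_one {G : Type*} [Group G] {k : G} :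
    IsWitness k ↔ IsOfFinOrder k ∧ ∀ x : G, descendingProd k x (orderOf k) = 1 :=
  Iff.rfl

namespace IsWitness

variable {G H : Type*} [Group G] [Group H]

protected theorem isOfFinOrder {k : G} (hk : IsWitness k) : IsOfFinOrder k :=
  hk.1

theorem descendingProd_eq_one {k : G} (hk : IsWitness k) (x : G) {n : ℕ} (hn : orderOf k ∣ n) :
    descendingProd k x n = 1 := by
  obtain ⟨m, rfl⟩ := hn
  rw [descendingProd_mul_of_pow_eq_one (pow_orderOf_eq_one k),
    (isWitness_iff_descendingProd_eq_one.1 hk).2, one_pow]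

theorem prodMk {k : G} {l : H} (hk : IsWitness k) (hl : IsWitness l) : IsWitness (k, l) := by
  refine isWitness_iff_descendingProd_eq_one.2
    ⟨hk.isOfFinOrder.prod_mk hl.isOfFinOrder, fun x => Prod.ext ?_ ?_⟩
  · exact (map_descendingProd (MonoidHom.fst G H) (k, l) x _).trans
      (hk.descendingProd_eq_one x.1 orderOf_fst_dvd_orderOf)
  · exact (map_descendingProd (MonoidHom.snd G H) (k, l) x _).trans
      (hl.descendingProd_eq_one x.2 orderOf_snd_dvd_orderOf)

theorem map_of_surjective {f : G →* H} (hf : Function.Surjective f) {k : G} (hk : IsWitness k)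
    {m : ℕ} (hm : orderOf k = orderOf (f k) * m) (hcop : ∀ y : H, (orderOf y).Coprime m) :
    IsWitness (f k) := by
  refine isWitness_iff_descendingProd_eq_one.2 ⟨f.isOfFinOrder hk.isOfFinOrder, fun y => ?_⟩
  obtain ⟨x, rfl⟩ := hf y
  have hpow : descendingProd (f k) (f x) (orderOf (f k)) ^ m = 1 := calc
    _ = descendingProd (f k) (f x) (orderOf k) := by
      rw [hm, descendingProd_mul_of_pow_eq_one (pow_orderOf_eq_one (f k))]
    _ = f (descendingProd k x (orderOf k)) := (map_descendingProd f k x _).symm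
    _ = 1 := by rw [hk.descendingProd_eq_one x dvd_rfl, map_one]
  exact (pow_eq_one_iff_of_coprime (hcop _)).1 ⟨pow_orderOf_eq_one _, hpow⟩

end IsWitness

theorem isWitness_prod_general {G₁ G₂ : Type*} [Group G₁] [Group G₂] :
    (∀ (k₁ : G₁) (k₂ : G₂), IsWitness k₁ → IsWitness k₂ → IsWitness (k₁, k₂)) ∧
    ((∀ (g₁ : G₁) (g₂ : G₂), (orderOf g₁).Coprime (orderOf g₂)) →
      ∀ k : G₁ × G₂, IsWitness k ↔ IsWitness k.1 ∧ IsWitness k.2) := by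
  refine ⟨fun _ _ => IsWitness.prodMk, fun hcop k => ⟨fun hk => ?_, fun h => h.1.prodMk h.2⟩⟩
  have horder : orderOf k = orderOf k.1 * orderOf k.2 :=
    (Prod.orderOf k).trans (hcop k.1 k.2).lcm_eq_mul
  constructor
  · exact hk.map_of_surjective (f := MonoidHom.fst G₁ G₂) Prod.fst_surjective horder
      fun g₁ => hcop g₁ k.2
  · exact hk.map_of_surjective (f := MonoidHom.snd G₁ G₂) Prod.snd_surjective
      (horder.trans (mul_comm _ _)) fun g₂ => (hcop k.1 g₂).symm

/-- If `k₁` is a witness for `G₁` and `k₂` is a witness for `G₂`, then `(k₁, k₂)` is a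
witness for `G₁ × G₂`; and if `|G₁|` and `|G₂|` are coprime, the witnesses of `G₁ × G₂`
are exactly the pairs of witnesses, i.e. `W(G₁) × W(G₂) = W(G₁ × G₂)`. -/
theorem isWitness_prod {G₁ G₂ : Type*} [Group G₁] [Group G₂]
    [Fintype G₁] [Fintype G₂] :
    (∀ (k₁ : G₁) (k₂ : G₂), IsWitness k₁ → IsWitness k₂ →
      IsWitness (k₁, k₂)) ∧
    (Nat.Coprime (Fintype.card G₁) (Fintype.card G₂) →
      ∀ k : G₁ × G₂, IsWitness k ↔ IsWitness k.1 ∧ IsWitness k.2) :=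
  isWitness_prod_general.imp_right fun h hcop =>
    h fun _ _ => Nat.Coprime.of_dvd orderOf_dvd_card orderOf_dvd_card hcop
end

section
/- Let G be a finite group, let k ∈ G, and let N₁ and N₂ be normal subgroups of G with N₁ ∩ N₂ = 1. If the coset k·N₁ is a witness for the quotient group G/N₁ and the coset k·N₂ is a witness for G/N₂, then k is a witness for G. -/
/-!
Since `N₁ ∩ N₂ = 1`, the group `G` embeds in `G ⧸ N₁ × G ⧸ N₂`. Witnesses pull back along injective
homomorphisms, and a pair of witnesses is a witness: if `k ^ m = 1`, then the product over
`m * q` factors is the `q`-th power of the product over `m` factors, so for a witness `k` it is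
trivial over any number `n` of factors such that `k ^ n = 1`.
-/

section Monoid

variable {M N : Type*} [Monoid M] [Monoid N]

/-- The ordered product `(x * k ^ (n - 1)) * ⋯ * (x * k) * x` of `n` factors. The number of factors
is a parameter, independent of `orderOf k`, so that products for `k` and for its images under
homomorphisms can be compared. -/
def witnessProd (k x : M) (n : ℕ) : M :=
  ((List.range n).map fun i => x * k ^ (n - 1 - i)).prod

@[simp]
theorem witnessProd_zero (k x : M) : witnessProd k x 0 = 1 := rfl

theorem witnessProd_succ (k x : M) (n : ℕ) :
    witnessProd k x (n + 1) = x * k ^ n * witnessProd k x n := by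
  simp [witnessProd, List.range_succ_eq_map, Function.comp_def, Nat.sub_sub, Nat.add_comm 1]

theorem map_witnessProd {F : Type*} [FunLike F M N] [MonoidHomClass F M N] (f : F) (k x : M)
    (n : ℕ) : f (witnessProd k x n) = witnessProd (f k) (f x) n := by
  simp [witnessProd, map_list_prod, Function.comp_def]

theorem witnessProd_add_of_pow_eq_one {k : M} {n : ℕ} (hk : k ^ n = 1) (x : M) (m : ℕ) :
    witnessProd k x (m + n) = witnessProd k x m * witnessProd k x n := by
  induction m with
  | zero => simp
  | succ m ih =>
    rw [Nat.add_right_comm, witnessProd_succ, witnessProd_succ, ih, pow_add, hk, mul_one,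
      ← mul_assoc]

theorem witnessProd_mul_of_pow_eq_one {k : M} {m : ℕ} (hk : k ^ m = 1) (x : M) (q : ℕ) :
    witnessProd k x (m * q) = witnessProd k x m ^ q := by
  induction q with
  | zero => simp
  | succ q ih => rw [Nat.mul_succ, witnessProd_add_of_pow_eq_one hk, ih, pow_succ]

end Monoid

theorem isWitness_iff_witnessProd_eq_one {G : Type*} [Group G] {k : G} :
    IsWitness k ↔ IsOfFinOrder k ∧ ∀ x : G, witnessProd k x (orderOf k) = 1 := Iff.rfl

namespace IsWitness

variable {G H : Type*} [Group G] [Group H]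

theorem witnessProd_eq_one {k : G} (hk : IsWitness k) (x : G) {n : ℕ} (hn : k ^ n = 1) :
    witnessProd k x n = 1 := by
  obtain ⟨q, rfl⟩ := orderOf_dvd_of_pow_eq_one hn
  rw [witnessProd_mul_of_pow_eq_one (pow_orderOf_eq_one k),
    (isWitness_iff_witnessProd_eq_one.1 hk).2 x, one_pow]

theorem of_map_injective {f : G →* H} (hf : Function.Injective f) {k : G}
    (hk : IsWitness (f k)) : IsWitness k := by
  refine isWitness_iff_witnessProd_eq_one.2 ⟨hf.isOfFinOrder_iff.1 hk.1, fun x => hf ?_⟩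
  rw [map_witnessProd, map_one]
  exact hk.witnessProd_eq_one (f x) (by rw [← map_pow, pow_orderOf_eq_one, map_one])

theorem prodMk_s7 {a : G} {b : H} (ha : IsWitness a) (hb : IsWitness b) : IsWitness (a, b) := by
  refine isWitness_iff_witnessProd_eq_one.2 ⟨ha.1.prod_mk hb.1, fun x => ?_⟩
  have hpow : (a, b) ^ orderOf (a, b) = 1 := pow_orderOf_eq_one _
  ext
  · exact (map_witnessProd (MonoidHom.fst G H) (a, b) x _).trans
      (ha.witnessProd_eq_one x.1 (congrArg Prod.fst hpow))
  · exact (map_witnessProd (MonoidHom.snd G H) (a, b) x _).trans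
      (hb.witnessProd_eq_one x.2 (congrArg Prod.snd hpow))

end IsWitness

theorem isWitness_of_quotients_general {G : Type*} [Group G] (k : G)
    (N₁ N₂ : Subgroup G) [N₁.Normal] [N₂.Normal] (h : N₁ ⊓ N₂ = ⊥)
    (h₁ : IsWitness (k : G ⧸ N₁)) (h₂ : IsWitness (k : G ⧸ N₂)) :
    IsWitness k := by
  let f : G →* (G ⧸ N₁) × (G ⧸ N₂) := (QuotientGroup.mk' N₁).prod (QuotientGroup.mk' N₂)
  have hf : Function.Injective f := by
    rw [← MonoidHom.ker_eq_bot_iff, MonoidHom.ker_prod, QuotientGroup.ker_mk',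
      QuotientGroup.ker_mk', h]
  exact IsWitness.of_map_injective hf (h₁.prodMk_s7 h₂)

/-- If `N₁` and `N₂` are normal subgroups of a finite group `G` intersecting trivially
and `k N₁`, `k N₂` are witnesses for `G/N₁` and `G/N₂` respectively, then `k` is a
witness for `G`. -/
theorem isWitness_of_quotients {G : Type*} [Group G] [Fintype G] (k : G)
    (N₁ N₂ : Subgroup G) [N₁.Normal] [N₂.Normal] (h : N₁ ⊓ N₂ = ⊥)
    (h₁ : IsWitness (k : G ⧸ N₁)) (h₂ : IsWitness (k : G ⧸ N₂)) :
    IsWitness k := by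
  exact isWitness_of_quotients_general k N₁ N₂ h h₁ h₂
end

section
/- Let G be a group, let k ∈ G be a witness (in particular k has finite order), and let N be a normal subgroup of G such that ⟨k⟩ ∩ N = 1. Then the coset k·N is a witness for the quotient group G/N. -/
theorem orderOf_map_eq_of_disjoint_ker {G M : Type*} [Group G] [Monoid M] {f : G →* M} {k : G}
    (h : Disjoint (Subgroup.zpowers k) f.ker) : orderOf (f k) = orderOf k := by
  refine orderOf_eq_orderOf_iff.mpr fun n => ⟨fun hn => ?_, fun hn => ?_⟩
  · have mem_ker : k ^ n ∈ f.ker := by rwa [MonoidHom.mem_ker, map_pow]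
    exact Subgroup.disjoint_def.mp h (Subgroup.npow_mem_zpowers k n) mem_ker
  · rw [← map_pow, hn, map_one]

theorem IsWitness.map {G H : Type*} [Group G] [Group H] {k : G} (hk : IsWitness k)
    {f : G →* H} (hf : Function.Surjective f) (horder : orderOf (f k) = orderOf k) :
    IsWitness (f k) := by
  refine ⟨f.isOfFinOrder hk.1, hf.forall.mpr fun x => ?_⟩
  rw [horder]
  calc ((List.range (orderOf k)).map fun i => f x * f k ^ (orderOf k - 1 - i)).prod
      = f ((List.range (orderOf k)).map fun i => x * k ^ (orderOf k - 1 - i)).prod := by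
        simp only [map_list_prod, List.map_map, Function.comp_def, map_mul, map_pow]
    _ = 1 := by rw [hk.2 x, map_one]

/-- If `k` is a witness for `G` and `N` is a normal subgroup of `G` with
`⟨k⟩ ∩ N = 1`, then the coset `k N` is a witness for `G ⧸ N`. -/
theorem isWitness_quotient {G : Type*} [Group G] (k : G) (hk : IsWitness k)
    (N : Subgroup G) [N.Normal] (h : Subgroup.zpowers k ⊓ N = ⊥) :
    IsWitness (k : G ⧸ N) := by
  have hdisj : Disjoint (Subgroup.zpowers k) (QuotientGroup.mk' N).ker := by
    rwa [QuotientGroup.ker_mk', disjoint_iff]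
  exact hk.map (QuotientGroup.mk'_surjective N) (orderOf_map_eq_of_disjoint_ker hdisj)
end

section
/- Let G be a finite group of odd order and let k ∈ G be a witness. Then the order of k equals the exponent of the centralizer C_G(k) of k in G. In particular, if k lies in the cyclic subgroup ⟨g⟩ generated by some g ∈ G, then the order of g equals the order of k. -/
theorem list_prod_map_mul_left_of_commute {M : Type*} [Monoid M] {x : M} {l : List M}
    (h : ∀ a ∈ l, Commute x a) : (l.map (x * ·)).prod = x ^ l.length * l.prod := by
  induction l with
  | nil => simp
  | cons a l ih =>
    obtain ⟨hxa, hxl⟩ := List.forall_mem_cons.mp h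
    calc ((a :: l).map (x * ·)).prod
        = x * a * (x ^ l.length * l.prod) := by rw [List.map_cons, List.prod_cons, ih hxl]
      _ = x * x ^ l.length * (a * l.prod) := (hxa.symm.pow_right _).mul_mul_mul_comm _ _
      _ = x ^ (a :: l).length * (a :: l).prod := by
        rw [List.length_cons, List.prod_cons, pow_succ']

theorem orderOf_dvd_exponent_centralizer {G : Type*} [Group G] {g k : G} (h : Commute g k) :
    orderOf g ∣ Monoid.exponent (Subgroup.centralizer {k}) :=
  orderOf_dvd_of_pow_eq_one <|
    Subgroup.pow_exponent_eq_one (Subgroup.mem_centralizer_singleton_iff.mpr h.eq)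

namespace IsWitness

variable {G : Type*} [Group G] {k : G}

theorem pow_orderOf_eq_one_of_commute (hk : IsWitness k) {x : G} (h : Commute x k) :
    x ^ orderOf k = 1 := by
  let powers := (List.range (orderOf k)).map fun i => k ^ (orderOf k - 1 - i)
  have hcomm : ∀ a ∈ powers, Commute x a :=
    List.forall_mem_map.mpr fun _ _ => h.pow_right _
  -- The witness condition at `1` removes the powers of `k` from the condition at `x`.
  have hpowers : powers.prod = 1 := by simpa only [one_mul] using hk.2 1
  have hlength : powers.length = orderOf k := by rw [List.length_map, List.length_range]
  calc x ^ orderOf k = x ^ powers.length * powers.prod := by rw [hlength, hpowers, mul_one]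
    _ = (powers.map (x * ·)).prod := (list_prod_map_mul_left_of_commute hcomm).symm
    _ = 1 := by rw [List.map_map]; exact hk.2 x

theorem exponent_centralizer_eq_orderOf (hk : IsWitness k) :
    Monoid.exponent (Subgroup.centralizer {k}) = orderOf k := by
  refine Nat.dvd_antisymm (Monoid.exponent_dvd_of_forall_pow_eq_one fun x => Subtype.ext ?_)
    (orderOf_dvd_exponent_centralizer (Commute.refl k))
  exact hk.pow_orderOf_eq_one_of_commute (Subgroup.mem_centralizer_singleton_iff.mp x.2)

theorem orderOf_eq_of_mem_zpowers (hk : IsWitness k) {g : G} (hg : k ∈ Subgroup.zpowers g) :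
    orderOf g = orderOf k := by
  have hcomm : Commute g k := by
    obtain ⟨m, rfl⟩ := Subgroup.mem_zpowers_iff.mp hg
    exact Commute.self_zpow g m
  exact Nat.dvd_antisymm
    (hk.exponent_centralizer_eq_orderOf ▸ orderOf_dvd_exponent_centralizer hcomm)
    (orderOf_dvd_of_mem_zpowers hg)

end IsWitness

theorem orderOf_witness_eq_exponent_centralizer_general {G : Type*} [Group G] {k : G}
    (hk : IsWitness k) :
    orderOf k = Monoid.exponent (Subgroup.centralizer {k}) ∧
      ∀ g : G, k ∈ Subgroup.zpowers g → orderOf g = orderOf k :=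
  ⟨hk.exponent_centralizer_eq_orderOf.symm, fun _ => hk.orderOf_eq_of_mem_zpowers⟩

/-- In a finite group of odd order, the order of a witness `k` equals the exponent of
its centralizer; in particular, if `k ∈ ⟨g⟩` then `|g| = |k|`. -/
theorem orderOf_witness_eq_exponent_centralizer {G : Type*} [Group G] [Fintype G]
    (hodd : Odd (Fintype.card G)) (k : G) (hk : IsWitness k) :
    orderOf k = Monoid.exponent (Subgroup.centralizer {k}) ∧
      ∀ g : G, k ∈ Subgroup.zpowers g → orderOf g = orderOf k :=
  orderOf_witness_eq_exponent_centralizer_general hk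
end

section
/- Let G be a finite group of odd order whose centre Z(G) has exponent equal to the exponent of G. Then G is a J-group; moreover Z(G) ∩ W(G) = B(Z(G)), so in particular every element of Z(G) of order equal to the exponent of G is a witness for G. If additionally G is abelian, then W(G) = B(G). -/
/-!
Let `k` be central of odd order `n`. The defining product of a witness collects to
`x ^ n * k ^ (0 + 1 + ⋯ + (n - 1))`, and `n` divides `n * (n - 1) / 2` because `n` is odd, so the
product is just `x ^ n`. Hence `k` is a witness exactly when `n` is a multiple of the exponent of
`G`, that is, equal to it. The centre, being abelian, has an element whose order is its exponent.
-/

theorem prod_map_mul_pow_of_commute {ι M : Type*} [Monoid M] {x k : M} (h : Commute x k)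
    (f : ι → ℕ) (l : List ι) :
    (l.map fun i => x * k ^ f i).prod = x ^ l.length * k ^ (l.map f).sum := by
  induction l with
  | nil => simp
  | cons i l ih =>
    simp only [List.map_cons, List.prod_cons, List.length_cons, List.sum_cons]
    calc x * k ^ f i * (l.map fun i => x * k ^ f i).prod
        = x * (k ^ f i * x ^ l.length) * k ^ (l.map f).sum := by rw [ih]; simp only [mul_assoc]
      _ = x * (x ^ l.length * k ^ f i) * k ^ (l.map f).sum := by rw [(h.pow_pow _ _).eq]
      _ = x ^ (l.length + 1) * k ^ (f i + (l.map f).sum) := by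
        rw [pow_succ', pow_add]; simp only [mul_assoc]

theorem dvd_sum_range_id_of_odd {n : ℕ} (hn : Odd n) : n ∣ ∑ i ∈ Finset.range n, i := by
  refine (Nat.coprime_two_right.mpr hn).dvd_of_dvd_mul_right ?_
  rw [Finset.sum_range_id_mul_two]
  exact dvd_mul_right n (n - 1)

section Witness

variable {G : Type*} [Group G] {k : G}

theorem prod_map_range_mul_pow_of_mem_center (hk : k ∈ Subgroup.center G)
    (hn : Odd (orderOf k)) (x : G) :
    ((List.range (orderOf k)).map fun i => x * k ^ (orderOf k - 1 - i)).prod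
      = x ^ orderOf k := by
  have hcomm : Commute x k := Subgroup.mem_center_iff.mp hk x
  have hsum : ((List.range (orderOf k)).map fun i => orderOf k - 1 - i).sum
      = ∑ i ∈ Finset.range (orderOf k), i :=
    Finset.sum_range_reflect (fun i => i) (orderOf k)
  have hpow : k ^ ∑ i ∈ Finset.range (orderOf k), i = 1 :=
    orderOf_dvd_iff_pow_eq_one.mp (dvd_sum_range_id_of_odd hn)
  rw [prod_map_mul_pow_of_commute hcomm (fun i => orderOf k - 1 - i), List.length_range, hsum,
    hpow, mul_one]

theorem isWitness_iff_orderOf_eq_exponent_of_mem_center (hk : k ∈ Subgroup.center G)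
    (hn : Odd (orderOf k)) : IsWitness k ↔ orderOf k = Monoid.exponent G := by
  have hfin : IsOfFinOrder k := orderOf_pos_iff.mp hn.pos
  calc IsWitness k ↔ ∀ x : G, x ^ orderOf k = 1 := by
        simp only [IsWitness, prod_map_range_mul_pow_of_mem_center hk hn, and_iff_right hfin]
    _ ↔ Monoid.exponent G ∣ orderOf k := Monoid.exponent_dvd_iff_forall_pow_eq_one.symm
    _ ↔ orderOf k = Monoid.exponent G :=
        ⟨Nat.dvd_antisymm (Monoid.order_dvd_exponent k), fun h => h.symm.dvd⟩

end Witness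

theorem exists_mem_center_orderOf_eq_exponent_center {G : Type*} [Group G]
    (h : Monoid.ExponentExists (Subgroup.center G)) :
    ∃ k ∈ Subgroup.center G, orderOf k = Monoid.exponent (Subgroup.center G) := by
  open scoped IsMulCommutative in
  obtain ⟨z, hz⟩ := Monoid.exists_orderOf_eq_exponent h
  exact ⟨z, z.2, (Subgroup.orderOf_coe z).trans hz⟩

theorem exp_center_eq_exp_isJGroup_general {G : Type*} [Group G]
    (hodd : Odd (Monoid.exponent G))
    (hexp : Monoid.exponent (Subgroup.center G) = Monoid.exponent G) :
    (∃ k : G, IsWitness k) ∧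
    (∀ k ∈ Subgroup.center G,
      (IsWitness k ↔ orderOf k = Monoid.exponent (Subgroup.center G))) ∧
    (∀ k ∈ Subgroup.center G,
      orderOf k = Monoid.exponent (Subgroup.center G) → IsWitness k) ∧
    ((∀ a b : G, a * b = b * a) →
      ∀ k : G, IsWitness k ↔ orderOf k = Monoid.exponent G) := by
  have isWitness_iff {k : G} (hk : k ∈ Subgroup.center G) :
      IsWitness k ↔ orderOf k = Monoid.exponent G :=
    isWitness_iff_orderOf_eq_exponent_of_mem_center hk
      (hodd.of_dvd_nat (Monoid.order_dvd_exponent k))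
  have hcenter : Monoid.ExponentExists (Subgroup.center G) :=
    Monoid.exponent_pos.mp (hexp ▸ hodd.pos)
  obtain ⟨z, hz, hzexp⟩ := exists_mem_center_orderOf_eq_exponent_center hcenter
  rw [hexp] at hzexp ⊢
  exact ⟨⟨z, (isWitness_iff hz).mpr hzexp⟩, fun _ hk => isWitness_iff hk,
    fun _ hk => (isWitness_iff hk).mpr,
    fun hcomm k => isWitness_iff (Subgroup.mem_center_iff.mpr fun g => hcomm g k)⟩

/-- If `G` is a finite group of odd order with `exp(Z(G)) = exp(G)`, then `G` is a
`J`-group, the central witnesses are exactly the big elements of the centre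
(`Z(G) ∩ W(G) = B(Z(G))`), in particular `B(Z(G)) ⊆ W(G)`, and if `G` is abelian then
`W(G) = B(G)`. -/
theorem exp_center_eq_exp_isJGroup {G : Type*} [Group G] [Fintype G]
    (hodd : Odd (Fintype.card G))
    (hexp : Monoid.exponent (Subgroup.center G) = Monoid.exponent G) :
    (∃ k : G, IsWitness k) ∧
    (∀ k ∈ Subgroup.center G,
      (IsWitness k ↔ orderOf k = Monoid.exponent (Subgroup.center G))) ∧
    (∀ k ∈ Subgroup.center G,
      orderOf k = Monoid.exponent (Subgroup.center G) → IsWitness k) ∧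
    ((∀ a b : G, a * b = b * a) →
      ∀ k : G, IsWitness k ↔ orderOf k = Monoid.exponent G) :=
  exp_center_eq_exp_isJGroup_general (hodd.of_dvd_nat Group.exponent_dvd_card) hexp
end

section
/- Let p be an odd prime and let G be a finite p-group. Suppose N is a normal subgroup of G, k ∈ G, the coset k·N has order m in G/N, the element k^m lies in the centre of N and has order equal to the exponent of N, and k·N is a witness for G/N. Then k is a witness for G. -/
/-- The ordered product `(x * k ^ (n - 1)) * ⋯ * (x * k) * x` that defines a witness, with its
length `n` decoupled from the order of `k`. -/
def descProd {M : Type*} [Monoid M] (x k : M) (n : ℕ) : M :=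
  ((List.range n).map fun i => x * k ^ (n - 1 - i)).prod

theorem isWitness_iff_descProd_eq_one {G : Type*} [Group G] {k : G} :
    IsWitness k ↔ IsOfFinOrder k ∧ ∀ x : G, descProd x k (orderOf k) = 1 :=
  Iff.rfl

section Monoid

variable {M : Type*} [Monoid M]

theorem descProd_zero (x k : M) : descProd x k 0 = 1 :=
  rfl

theorem descProd_succ (x k : M) (n : ℕ) :
    descProd x k (n + 1) = x * k ^ n * descProd x k n := by
  simp [descProd, List.range_succ_eq_map, Function.comp_def, Nat.sub_sub, add_comm 1]

theorem map_descProd {M' : Type*} [Monoid M'] (f : M →* M') (x k : M) (n : ℕ) :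
    f (descProd x k n) = descProd (f x) (f k) n := by
  simp [descProd, map_list_prod, Function.comp_def]

theorem orderOf_eq_orderOf_map_mul_orderOf_pow {k : M} {M' : Type*} [Monoid M'] (f : M →* M')
    (hf : IsOfFinOrder (f k)) : orderOf k = orderOf (f k) * orderOf (k ^ orderOf (f k)) := by
  have hdvd : orderOf (f k) ∣ orderOf k := orderOf_map_dvd f k
  rw [orderOf_pow_of_dvd hf.orderOf_pos.ne' hdvd, Nat.mul_div_cancel' hdvd]

end Monoid

theorem dvd_choose_two_of_odd {n : ℕ} (hn : Odd n) : n ∣ n.choose 2 := by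
  obtain ⟨r, rfl⟩ := hn
  refine ⟨r, ?_⟩
  rw [Nat.choose_two_right, Nat.add_sub_cancel, mul_left_comm, Nat.mul_div_cancel_left _ two_pos]

theorem odd_orderOf_of_isPGroup {G : Type*} [Group G] {p : ℕ} (hp : Odd p) (hG : IsPGroup p G)
    (g : G) : Odd (orderOf g) := by
  obtain ⟨r, hr⟩ := hG g
  exact hp.pow.of_dvd_nat (orderOf_dvd_of_pow_eq_one hr)

section Group

variable {G : Type*} [Group G] {k : G} {m : ℕ}

theorem exists_descProd_add_mul_eq (A : Subgroup G) [A.Normal] (hk : k ^ m ∈ A)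
    (hcentral : k ^ m ∈ Subgroup.centralizer A) (x : G) (n : ℕ) :
    ∃ c ∈ A, ∀ q : ℕ,
      descProd x k (n + m * q) = c ^ q * (descProd x k n * descProd x k (m * q)) := by
  induction n with
  | zero => exact ⟨1, A.one_mem, by simp [descProd_zero]⟩
  | succ n ih =>
    obtain ⟨c, hc, hD⟩ := ih
    have hcomm : Commute (k ^ m) c := (hcentral c hc).symm
    set g := x * k ^ n with hg
    refine ⟨g * (k ^ m * c) * g⁻¹, ‹A.Normal›.conj_mem _ (A.mul_mem hk hc) g, fun q => ?_⟩
    calc descProd x k (n + 1 + m * q)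
        = x * k ^ (n + m * q) * descProd x k (n + m * q) := by
          rw [add_right_comm, descProd_succ]
      _ = g * (k ^ m * c) ^ q * (descProd x k n * descProd x k (m * q)) := by
          rw [hD, hcomm.mul_pow, pow_add, pow_mul, hg]
          simp only [mul_assoc]
      _ = (g * (k ^ m * c) * g⁻¹) ^ q * (descProd x k (n + 1) * descProd x k (m * q)) := by
          rw [conj_pow, descProd_succ, ← hg]
          simp only [mul_assoc, inv_mul_cancel_left]

theorem exists_descProd_mul_eq (N : Subgroup G) [N.Normal] (hk : k ^ m ∈ N)
    (hcentral : k ^ m ∈ Subgroup.centralizer N) {x : G} (hx : descProd x k m ∈ N) :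
    ∃ c ∈ N, ∀ q : ℕ, descProd x k (m * q) = c ^ q.choose 2 * descProd x k m ^ q := by
  obtain ⟨c, ⟨hcN, hcC⟩, hD⟩ := exists_descProd_add_mul_eq (N ⊓ Subgroup.centralizer N)
    ⟨hk, hcentral⟩ (Subgroup.centralizer_le inf_le_left hcentral) x m
  have hcomm : Commute (descProd x k m) c := hcC _ hx
  refine ⟨c, hcN, fun q => ?_⟩
  induction q with
  | zero => simp [descProd_zero]
  | succ q ih =>
    calc descProd x k (m * (q + 1))
        = c ^ q * (descProd x k m * descProd x k (m * q)) := by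
          rw [mul_add_one, add_comm, hD]
      _ = c ^ (q + q.choose 2) * descProd x k m ^ (q + 1) := by
          rw [ih, ← mul_assoc (descProd x k m), (hcomm.pow_right _).eq, pow_add, pow_succ']
          simp only [mul_assoc]
      _ = c ^ (q + 1).choose 2 * descProd x k m ^ (q + 1) := by
          rw [Nat.choose_succ_succ', Nat.choose_one_right]

theorem descProd_mul_exponent_eq_one (N : Subgroup G) [N.Normal]
    (hodd : Odd (Monoid.exponent N)) (hk : k ^ m ∈ N)
    (hcentral : k ^ m ∈ Subgroup.centralizer N) {x : G} (hx : descProd x k m ∈ N) :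
    descProd x k (m * Monoid.exponent N) = 1 := by
  have pow_exponent : ∀ a ∈ N, a ^ Monoid.exponent N = 1 := fun a ha =>
    congrArg Subtype.val (Monoid.pow_exponent_eq_one (⟨a, ha⟩ : N))
  obtain ⟨c, hc, hD⟩ := exists_descProd_mul_eq N hk hcentral hx
  obtain ⟨s, hs⟩ := dvd_choose_two_of_odd hodd
  rw [hD, hs, pow_mul, pow_exponent c hc, one_pow, pow_exponent _ hx, one_mul]

theorem IsWitness.descProd_mem {N : Subgroup G} [N.Normal] (hw : IsWitness (k : G ⧸ N)) (x : G) :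
    descProd x k (orderOf (k : G ⧸ N)) ∈ N := by
  rw [← QuotientGroup.eq_one_iff, ← QuotientGroup.mk'_apply, map_descProd]
  exact hw.2 x

theorem isWitness_of_quotient_witness_general (N : Subgroup G) [N.Normal]
    (hm : orderOf (k : G ⧸ N) = m) (hcentral : k ^ m ∈ Subgroup.centralizer N)
    (hord : orderOf (k ^ m) = Monoid.exponent N) (hodd : Odd (Monoid.exponent N))
    (hw : IsWitness (k : G ⧸ N)) : IsWitness k := by
  subst hm
  have hmem : k ^ orderOf (k : G ⧸ N) ∈ N := by
    rw [← QuotientGroup.eq_one_iff, QuotientGroup.mk_pow, pow_orderOf_eq_one]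
  have hfin : IsOfFinOrder (k ^ orderOf (k : G ⧸ N)) :=
    orderOf_pos_iff.mp (hord ▸ hodd.pos)
  have hcard : orderOf k = orderOf (k : G ⧸ N) * Monoid.exponent N :=
    hord ▸ orderOf_eq_orderOf_map_mul_orderOf_pow (QuotientGroup.mk' N) hw.1
  refine isWitness_iff_descProd_eq_one.mpr ⟨hfin.of_pow hw.1.orderOf_pos.ne', fun x => ?_⟩
  rw [hcard]
  exact descProd_mul_exponent_eq_one N hodd hmem hcentral (hw.descProd_mem x)

end Group

/-- Let `G` be a finite `p`-group with `p` odd, `N ⊴ G`, and `k ∈ G` with `k N` of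
order `m` in `G ⧸ N`.  If `k ^ m` lies in the centre of `N`, `k ^ m` has order equal to
the exponent of `N`, and `k N` is a witness for `G ⧸ N`, then `k` is a witness
for `G`. -/
theorem isWitness_of_quotient_witness {G : Type*} [Group G] [Fintype G] (p : ℕ)
    (hp : p.Prime) (hodd : Odd p) (hG : IsPGroup p G)
    (N : Subgroup G) [N.Normal] (k : G) (m : ℕ)
    (hm : orderOf (k : G ⧸ N) = m)
    (hmem : k ^ m ∈ N) (hcentral : ∀ x ∈ N, x * k ^ m = k ^ m * x)
    (hord : orderOf (k ^ m) = Monoid.exponent N)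
    (hw : IsWitness (k : G ⧸ N)) :
    IsWitness k := by
  have hodd_exp : Odd (Monoid.exponent N) := hord ▸ odd_orderOf_of_isPGroup hodd hG (k ^ m)
  exact isWitness_of_quotient_witness_general N hm hcentral hord hodd_exp hw
end

section
/- Let p be an odd prime and let G be a powerful finite p-group, meaning that the derived subgroup [G,G] is contained in the subgroup generated by the p-th powers of elements of G. Then G is a J-group and every element of G whose order equals the exponent of G is a witness (that is, B(G) ⊆ W(G)). -/
/-!
Let `λ 0 = G` and `λ (i + 1) = ⟨x ^ p : x ∈ λ i⟩ [λ i, G]` be the lower exponent-`p` central series.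
If `k ^ n` is central, then the descending product `D n = (x k^(n-1)) ⋯ (x k) x` satisfies
`D (t n) = D n ^ t * (k ^ n) ^ (n * t.choose 2)`. As `p` is odd, it divides `p.choose 2`, so working
modulo `λ (m + 1)` this identity shows inductively that `D (p ^ m) ∈ λ m`, in any group.

If `G` is powerful, every element of `λ i` is a `p ^ i`-th power modulo `λ (i + 1)`. Hence, if `G`
has exponent `p ^ m`, the series is constant from `λ m` on; since it reaches `⊥` when `G` is
nilpotent, `λ m = ⊥` and so `D (p ^ m) = 1`.
-/

namespace PowerfulPGroup

open Subgroup
open scoped commutatorElement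

lemma dvd_choose_two_of_odd {p : ℕ} (hodd : Odd p) : p ∣ p.choose 2 := by
  rw [Nat.choose_two_right, Nat.mul_div_assoc p (Nat.Odd.sub_odd hodd odd_one).two_dvd]
  exact dvd_mul_right _ _

section Monoid

variable {M N : Type*} [Monoid M] [Monoid N]

lemma mul_pow_eq_pow_mul_mul_pow {a b c : M} (h : b * a = a * b * c) (hca : Commute c a)
    (n : ℕ) : b * a ^ n = a ^ n * b * c ^ n := by
  induction n with
  | zero => simp
  | succ n ih =>
    calc b * a ^ (n + 1)
        = a ^ n * b * (c ^ n * a) := by rw [pow_succ, ← mul_assoc, ih, mul_assoc]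
      _ = a ^ n * (b * a) * c ^ n := by rw [(hca.pow_left n).eq]; simp only [mul_assoc]
      _ = a ^ (n + 1) * b * c ^ (n + 1) := by
        rw [h, pow_succ a, pow_succ' c]; simp only [mul_assoc]

lemma mul_pow_eq_pow_mul_pow_mul_pow_choose_two {a b c : M} (h : b * a = a * b * c)
    (hca : Commute c a) (hcb : Commute c b) (n : ℕ) :
    (a * b) ^ n = a ^ n * b ^ n * c ^ n.choose 2 := by
  induction n with
  | zero => simp
  | succ n ih =>
    calc (a * b) ^ (n + 1)
        = a * (b * a ^ n) * b ^ n * c ^ n.choose 2 := by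
          rw [pow_succ', ih]; simp only [mul_assoc]
      _ = a * a ^ n * b * (c ^ n * b ^ n) * c ^ n.choose 2 := by
          rw [mul_pow_eq_pow_mul_mul_pow h hca]; simp only [mul_assoc]
      _ = a ^ (n + 1) * b ^ (n + 1) * (c ^ n * c ^ n.choose 2) := by
          rw [(hcb.pow_pow n n).eq, pow_succ' a, pow_succ' b]; simp only [mul_assoc]
      _ = a ^ (n + 1) * b ^ (n + 1) * c ^ (n + 1).choose 2 := by
          rw [Nat.choose_succ_succ' n 1, Nat.choose_one_right, pow_add c]

/-- The descending product `(x * k ^ (n - 1)) * ⋯ * (x * k) * x`, whose value at `n = orderOf k`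
decides whether `k` is a witness. -/
def descProd (x k : M) : ℕ → M
  | 0 => 1
  | n + 1 => x * k ^ n * descProd x k n

lemma list_prod_eq_descProd (x k : M) (n : ℕ) :
    ((List.range n).map fun i => x * k ^ (n - 1 - i)).prod = descProd x k n := by
  induction n with
  | zero => rfl
  | succ n ih =>
    rw [List.range_succ_eq_map, List.map_cons, List.prod_cons, descProd, ← ih, List.map_map]
    congr 3
    funext i
    simp [Nat.sub_sub, Nat.add_comm]

lemma map_descProd (f : M →* N) (x k : M) (n : ℕ) :
    f (descProd x k n) = descProd (f x) (f k) n := by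
  induction n with
  | zero => exact map_one f
  | succ n ih => simp only [descProd, map_mul, map_pow, ih]

lemma descProd_add (x k : M) (a b : ℕ) :
    descProd x k (a + b) = descProd (x * k ^ b) k a * descProd x k b := by
  induction a with
  | zero => simp [descProd]
  | succ a ih =>
    rw [Nat.succ_add, descProd, ih, descProd, add_comm a b, pow_add]
    simp only [mul_assoc]

lemma commute_descProd {c x k : M} (hx : Commute c x) (hk : Commute c k) (n : ℕ) :
    Commute c (descProd x k n) := by
  induction n with
  | zero => exact Commute.one_right c
  | succ n ih => exact (hx.mul_right (hk.pow_right n)).mul_right ih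

lemma descProd_mul_left {c x k : M} (hx : Commute c x) (hk : Commute c k) (n : ℕ) :
    descProd (x * c) k n = descProd x k n * c ^ n := by
  induction n with
  | zero => simp [descProd]
  | succ n ih =>
    have hc : Commute c (k ^ n * descProd x k n) :=
      (hk.pow_right n).mul_right (commute_descProd hx hk n)
    calc descProd (x * c) k (n + 1)
        = x * (c * (k ^ n * descProd x k n)) * c ^ n := by
          rw [descProd, ih]; simp only [mul_assoc]
      _ = descProd x k (n + 1) * c ^ (n + 1) := by
          rw [hc.eq, descProd, pow_succ']; simp only [mul_assoc]

lemma descProd_mul {x k : M} {n : ℕ} (hx : Commute (k ^ n) x) (t : ℕ) :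
    descProd x k (t * n) = descProd x k n ^ t * (k ^ n) ^ (n * t.choose 2) := by
  induction t with
  | zero => simp [descProd]
  | succ t ih =>
    have hk : Commute (k ^ n) k := (Commute.refl k).pow_left n
    have hD : Commute ((k ^ n) ^ (t * n)) (descProd x k n ^ t) :=
      (commute_descProd hx hk n).pow_pow _ _
    calc descProd x k ((t + 1) * n)
        = descProd (x * (k ^ n) ^ t) k n * descProd x k (t * n) := by
          rw [add_mul, one_mul, add_comm, descProd_add, mul_comm t, pow_mul]
      _ = descProd x k n * ((k ^ n) ^ (t * n) * descProd x k n ^ t) *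
            (k ^ n) ^ (n * t.choose 2) := by
          rw [descProd_mul_left (hx.pow_left t) (hk.pow_left t), ih, ← pow_mul]
          simp only [mul_assoc]
      _ = descProd x k n ^ (t + 1) * (k ^ n) ^ (t * n + n * t.choose 2) := by
          rw [hD.eq, pow_succ', pow_add]; simp only [mul_assoc]
      _ = descProd x k n ^ (t + 1) * (k ^ n) ^ (n * (t + 1).choose 2) := by
          rw [Nat.choose_succ_succ' t 1, Nat.choose_one_right, mul_add, mul_comm t n]

end Monoid

/-- The lower exponent-`p` central series of a group `G`, indexed from `lowerPSeries p G 0 = ⊤`. -/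
def lowerPSeries (p : ℕ) (G : Type*) [Group G] : ℕ → Subgroup G
  | 0 => ⊤
  | i + 1 => closure {y | ∃ x ∈ lowerPSeries p G i, x ^ p = y} ⊔ ⁅lowerPSeries p G i, ⊤⁆

section LowerPSeries

variable {G : Type*} [Group G] {p i : ℕ}

lemma pow_mem_lowerPSeries_succ {x : G} (hx : x ∈ lowerPSeries p G i) :
    x ^ p ∈ lowerPSeries p G (i + 1) :=
  mem_sup_left (subset_closure ⟨x, hx, rfl⟩)

lemma commutator_mem_lowerPSeries_succ {x : G} (hx : x ∈ lowerPSeries p G i) (g : G) :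
    ⁅x, g⁆ ∈ lowerPSeries p G (i + 1) :=
  mem_sup_right (commutator_mem_commutator hx (mem_top g))

lemma lowerPSeries_succ_le {H : Subgroup G} (hpow : ∀ x ∈ lowerPSeries p G i, x ^ p ∈ H)
    (hcomm : ∀ x ∈ lowerPSeries p G i, ∀ g : G, ⁅x, g⁆ ∈ H) : lowerPSeries p G (i + 1) ≤ H :=
  sup_le ((closure_le H).2 fun _ ⟨x, hx, hy⟩ => hy ▸ hpow x hx)
    (commutator_le.2 fun x hx g _ => hcomm x hx g)

lemma lowerPSeries_succ_le_self [(lowerPSeries p G i).Normal] :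
    lowerPSeries p G (i + 1) ≤ lowerPSeries p G i :=
  lowerPSeries_succ_le (fun _ hx => pow_mem hx p) fun _ hx g =>
    commutator_le_left _ ⊤ (commutator_mem_commutator hx (mem_top g))

instance lowerPSeries_normal (p : ℕ) (G : Type*) [Group G] (i : ℕ) :
    (lowerPSeries p G i).Normal := by
  induction i with
  | zero => exact normal_of_characteristic ⊤
  | succ i _ =>
    exact commutator_top_right_le_iff.1
      ((commutator_mono lowerPSeries_succ_le_self le_rfl).trans le_sup_right)

lemma lowerPSeries_antitone (p : ℕ) (G : Type*) [Group G] : Antitone (lowerPSeries p G) :=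
  antitone_nat_of_succ_le fun _ => lowerPSeries_succ_le_self

lemma pow_pow_mem_lowerPSeries (x : G) (i : ℕ) : x ^ p ^ i ∈ lowerPSeries p G i := by
  induction i with
  | zero => exact mem_top _
  | succ i ih =>
    rw [pow_succ, pow_mul]
    exact pow_mem_lowerPSeries_succ ih

lemma lowerPSeries_le_comap {H : Type*} [Group H] (f : G →* H) (i : ℕ) :
    lowerPSeries p G i ≤ (lowerPSeries p H i).comap f := by
  induction i with
  | zero => exact fun x _ => mem_top (f x)
  | succ i ih =>
    refine lowerPSeries_succ_le (fun x hx => ?_) fun x hx g => ?_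
    · rw [mem_comap, map_pow]
      exact pow_mem_lowerPSeries_succ (ih hx)
    · rw [mem_comap, map_commutatorElement]
      exact commutator_mem_lowerPSeries_succ (ih hx) (f g)

lemma mk_pow_eq_one_of_mem {x : G} (hx : x ∈ lowerPSeries p G i) :
    (x : G ⧸ lowerPSeries p G (i + 1)) ^ p = 1 :=
  (QuotientGroup.eq_one_iff _).2 (pow_mem_lowerPSeries_succ hx)

lemma commute_mk_of_mem {x : G} (hx : x ∈ lowerPSeries p G i) (q : G ⧸ lowerPSeries p G (i + 1)) :
    Commute (x : G ⧸ lowerPSeries p G (i + 1)) q := by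
  induction q using QuotientGroup.induction_on with
  | H g =>
    rw [← commutatorElement_eq_one_iff_commute]
    exact (QuotientGroup.eq_one_iff _).2 (commutator_mem_lowerPSeries_succ hx g)

lemma exists_mul_eq_of_mk_eq {N : Subgroup G} [N.Normal] {x y : G} (h : (x : G ⧸ N) = y) :
    ∃ z ∈ N, z * y = x :=
  ⟨x / y, QuotientGroup.eq_iff_div_mem.1 h, div_mul_cancel x y⟩

lemma mk_pow_congr {x y : G} (h : (x : G ⧸ lowerPSeries p G i) = y) :
    (x : G ⧸ lowerPSeries p G (i + 1)) ^ p = (y : G ⧸ lowerPSeries p G (i + 1)) ^ p := by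
  obtain ⟨z, hz, rfl⟩ := exists_mul_eq_of_mk_eq h
  rw [QuotientGroup.mk_mul, (commute_mk_of_mem hz _).mul_pow, mk_pow_eq_one_of_mem hz, one_mul]

lemma mk_commutator_congr {x y : G} (h : (x : G ⧸ lowerPSeries p G i) = y) (g : G) :
    ((⁅x, g⁆ : G) : G ⧸ lowerPSeries p G (i + 1)) = (⁅y, g⁆ : G) := by
  obtain ⟨z, hz, rfl⟩ := exists_mul_eq_of_mk_eq h
  have hzg : ((⁅z, g⁆ : G) : G ⧸ lowerPSeries p G (i + 1)) = 1 :=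
    (QuotientGroup.eq_one_iff _).2 (commutator_mem_lowerPSeries_succ hz g)
  rw [commutatorElement_mul_left_eq_conj_mul, QuotientGroup.mk_mul, hzg, mul_one,
    QuotientGroup.mk_mul, QuotientGroup.mk_mul, (commute_mk_of_mem hz _).eq, QuotientGroup.mk_inv,
    mul_inv_cancel_right]

lemma mk_mul_pow_of_mem (hodd : Odd p) {a : G} (ha : a ∈ lowerPSeries p G i) (b : G) :
    ((a * b : G) : G ⧸ lowerPSeries p G (i + 2)) ^ p =
      (a : G ⧸ lowerPSeries p G (i + 2)) ^ p * (b : G ⧸ lowerPSeries p G (i + 2)) ^ p := by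
  have hc : ⁅b⁻¹, a⁻¹⁆ ∈ lowerPSeries p G (i + 1) := by
    rw [← commutatorElement_inv]
    exact inv_mem (commutator_mem_lowerPSeries_succ (inv_mem ha) b⁻¹)
  have hba : (b : G ⧸ lowerPSeries p G (i + 2)) * a = a * b * (⁅b⁻¹, a⁻¹⁆ : G) := by
    simp only [← QuotientGroup.mk_mul]
    congr 1
    rw [commutatorElement_def]
    group
  obtain ⟨r, hr⟩ := dvd_choose_two_of_odd hodd
  rw [QuotientGroup.mk_mul, mul_pow_eq_pow_mul_pow_mul_pow_choose_two hba (commute_mk_of_mem hc _)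
    (commute_mk_of_mem hc _), hr, pow_mul, mk_pow_eq_one_of_mem hc, one_pow, mul_one]

lemma mk_commutator_pow_left (hodd : Odd p) {u : G} (hu : u ∈ lowerPSeries p G i) (g : G) :
    ((⁅u ^ p, g⁆ : G) : G ⧸ lowerPSeries p G (i + 3)) =
      ((⁅u, g⁆ : G) : G ⧸ lowerPSeries p G (i + 3)) ^ p := by
  have hconj : ⁅u, g⁆ * (g * u * g⁻¹) = u := by rw [commutatorElement_def]; group
  have h := mk_mul_pow_of_mem hodd (commutator_mem_lowerPSeries_succ hu g) (g * u * g⁻¹)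
  rw [hconj, ← mul_inv_eq_iff_eq_mul] at h
  simp only [← QuotientGroup.mk_pow, ← QuotientGroup.mk_inv, ← QuotientGroup.mk_mul] at h ⊢
  rw [← h, conj_pow, commutatorElement_def]
  congr 1
  group

lemma descProd_mem_lowerPSeries (hodd : Odd p) (x k : G) (m : ℕ) :
    descProd x k (p ^ m) ∈ lowerPSeries p G m := by
  induction m with
  | zero => exact mem_top _
  | succ m ih =>
    have hk : k ^ p ^ m ∈ lowerPSeries p G m := pow_pow_mem_lowerPSeries k m
    obtain ⟨r, hr⟩ := dvd_choose_two_of_odd hodd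
    have hmap (n : ℕ) : ((descProd x k n : G) : G ⧸ lowerPSeries p G (m + 1)) = descProd ↑x ↑k n :=
      map_descProd (QuotientGroup.mk' _) x k n
    rw [← QuotientGroup.eq_one_iff]
    calc ((descProd x k (p ^ (m + 1)) : G) : G ⧸ lowerPSeries p G (m + 1))
        = (descProd x k (p ^ m) : G) ^ p * (k ^ p ^ m : G) ^ (p ^ m * p.choose 2) := by
          rw [hmap, pow_succ', descProd_mul (commute_mk_of_mem hk _), hmap, QuotientGroup.mk_pow]
      _ = (k ^ p ^ m : G) ^ (p * (p ^ m * r)) := by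
          rw [mk_pow_eq_one_of_mem ih, one_mul, hr, mul_left_comm]
      _ = 1 := by rw [pow_mul, mk_pow_eq_one_of_mem hk, one_pow]

end LowerPSeries

section Nilpotent

variable {G : Type*} [Group G] {p m : ℕ}

open scoped IsMulCommutative in
lemma lowerPSeries_add_le_range_pow {i : ℕ} (hi : lowerPSeries p G i ≤ center G) (j : ℕ) :
    lowerPSeries p G (i + j) ≤
      (powMonoidHom (α := center G) (p ^ j)).range.map (center G).subtype := by
  induction j with
  | zero => exact fun x hx => ⟨⟨x, hi hx⟩, ⟨⟨x, hi hx⟩, by simp⟩, rfl⟩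
  | succ j ih =>
    refine lowerPSeries_succ_le (fun x hx => ?_) fun x hx g => ?_
    · obtain ⟨_, ⟨z, rfl⟩, rfl⟩ := ih hx
      exact ⟨z ^ p ^ (j + 1), ⟨z, rfl⟩, by simp [pow_succ, pow_mul]⟩
    · have hx' : Commute x g :=
        (mem_center_iff.1 (hi (lowerPSeries_antitone p G (i.le_add_right j) hx)) g).symm
      rw [hx'.commutator_eq]
      exact one_mem _

lemma exists_lowerPSeries_eq_bot [Group.IsNilpotent G] (hm : ∀ g : G, g ^ p ^ m = 1) :
    ∃ i, lowerPSeries p G i = ⊥ := by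
  revert hm
  refine Group.nilpotent_center_quotient_ind
    (P := fun G _ _ => (∀ g : G, g ^ p ^ m = 1) → ∃ i, lowerPSeries p G i = ⊥) G
    (fun G _ _ _ => ⟨0, Subsingleton.elim _ _⟩) fun G _ _ ih hm => ?_
  obtain ⟨i, hi⟩ := ih fun q => by
    induction q using QuotientGroup.induction_on with
    | H g => rw [← QuotientGroup.mk_pow, hm, QuotientGroup.mk_one]
  have hcenter : lowerPSeries p G i ≤ center G := by
    simpa only [hi, MonoidHom.comap_bot, QuotientGroup.ker_mk'] using
      lowerPSeries_le_comap (p := p) (QuotientGroup.mk' (center G)) i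
  refine ⟨i + m, eq_bot_iff.2 fun y hy => ?_⟩
  obtain ⟨_, ⟨z, rfl⟩, rfl⟩ := lowerPSeries_add_le_range_pow hcenter m hy
  exact hm z

end Nilpotent

/-- The condition `[G, G] ≤ ⟨g ^ p⟩` which, for `p` odd, defines powerful `p`-groups; neither
finiteness nor being a `p`-group is built in. -/
def IsPowerful (p : ℕ) (G : Type*) [Group G] : Prop :=
  commutator G ≤ closure (Set.range fun g : G => g ^ p)

section Powerful

variable {G : Type*} [Group G] {p : ℕ}

/-- The `p`-th power map from the `i`-th term of the lower exponent-`p` central series to `G`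
modulo the term of index `i + 2`, a homomorphism because `p` is odd. -/
def powHom (G : Type*) [Group G] (hodd : Odd p) (i : ℕ) :
    lowerPSeries p G i →* G ⧸ lowerPSeries p G (i + 2) :=
  MonoidHom.mk' (fun x => ((x : G) : G ⧸ lowerPSeries p G (i + 2)) ^ p)
    fun a b => mk_mul_pow_of_mem hodd a.2 b

lemma IsPowerful.lowerPSeries_succ_le_comap_range_powHom (hG : IsPowerful p G) (hodd : Odd p)
    (i : ℕ) : lowerPSeries p G (i + 1) ≤ (powHom G hodd i).range.comap (QuotientGroup.mk' _) := by
  induction i with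
  | zero =>
    refine lowerPSeries_succ_le (fun x hx => ⟨⟨x, hx⟩, rfl⟩) fun x _ g => ?_
    refine (closure_le _).2 ?_ (hG (commutator_mem_commutator (mem_top x) (mem_top g)))
    rintro _ ⟨y, rfl⟩
    exact ⟨⟨y, mem_top y⟩, rfl⟩
  | succ i ih =>
    refine lowerPSeries_succ_le (fun x hx => ⟨⟨x, hx⟩, rfl⟩) fun x hx g => ?_
    obtain ⟨⟨u, hu⟩, hux⟩ := ih hx
    exact ⟨⟨⁅u, g⁆, commutator_mem_lowerPSeries_succ hu g⟩,
      (mk_commutator_pow_left hodd hu g).symm.trans (mk_commutator_congr hux g)⟩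

lemma IsPowerful.exists_mk_eq_pow_pow (hG : IsPowerful p G) (hodd : Odd p) {i : ℕ} {y : G}
    (hy : y ∈ lowerPSeries p G i) :
    ∃ g : G, (y : G ⧸ lowerPSeries p G (i + 1)) = ((g ^ p ^ i : G) : G ⧸ _) := by
  induction i generalizing y with
  | zero => exact ⟨y, by rw [pow_zero, pow_one]⟩
  | succ i ih =>
    obtain ⟨⟨x, hx⟩, hxy⟩ := hG.lowerPSeries_succ_le_comap_range_powHom hodd i hy
    obtain ⟨g, hg⟩ := ih hx
    refine ⟨g, hxy.symm.trans ((mk_pow_congr hg).trans ?_)⟩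
    rw [← QuotientGroup.mk_pow, ← pow_mul, ← pow_succ]

lemma IsPowerful.lowerPSeries_eq_bot [Group.IsNilpotent G] (hG : IsPowerful p G) (hodd : Odd p)
    {m : ℕ} (hm : ∀ g : G, g ^ p ^ m = 1) : lowerPSeries p G m = ⊥ := by
  have hstable (j : ℕ) : lowerPSeries p G m ≤ lowerPSeries p G (m + j) := by
    induction j with
    | zero => exact le_rfl
    | succ j ih =>
      refine ih.trans fun y hy => ?_
      obtain ⟨g, hg⟩ := hG.exists_mk_eq_pow_pow hodd hy
      rwa [pow_add, pow_mul, hm, one_pow, QuotientGroup.mk_one, QuotientGroup.eq_one_iff] at hg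
  obtain ⟨i, hi⟩ := exists_lowerPSeries_eq_bot hm
  exact eq_bot_iff.2 <| (hstable i).trans <|
    (lowerPSeries_antitone p G (Nat.le_add_left i m)).trans hi.le

lemma IsPowerful.isWitness [Group.IsNilpotent G] (hG : IsPowerful p G) (hodd : Odd p) {m : ℕ}
    (hexp : Monoid.exponent G = p ^ m) {k : G} (hk : orderOf k = p ^ m) : IsWitness k := by
  refine ⟨orderOf_pos_iff.1 (hk ▸ pow_pos hodd.pos m), fun x => ?_⟩
  have hbot : lowerPSeries p G m = ⊥ :=
    hG.lowerPSeries_eq_bot hodd fun g => hexp ▸ Monoid.pow_exponent_eq_one g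
  rw [list_prod_eq_descProd, hk, ← mem_bot, ← hbot]
  exact descProd_mem_lowerPSeries hodd x k m

end Powerful

end PowerfulPGroup

theorem powerful_pGroup_isJGroup_general {G : Type*} [Group G] [Group.IsNilpotent G] {p m : ℕ}
    (hp : p.Prime) (hodd : Odd p) (hexp : Monoid.exponent G = p ^ m)
    (hpow : PowerfulPGroup.IsPowerful p G) :
    (∃ k : G, IsWitness k) ∧ ∀ k : G, orderOf k = Monoid.exponent G → IsWitness k := by
  refine ⟨?_, fun k hk => hpow.isWitness hodd hexp (hk.trans hexp)⟩
  obtain ⟨k, hk⟩ := hp.exists_orderOf_eq_pow_factorization_exponent G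
  rw [hexp, hp.factorization_pow, Finsupp.single_eq_same] at hk
  exact ⟨k, hpow.isWitness hodd hexp hk⟩

/-- A powerful finite `p`-group with `p` odd (i.e. `[G,G] ≤ ⟨g^p : g ∈ G⟩`) is a
`J`-group and every element of order equal to the exponent of `G` is a witness
(`B(G) ⊆ W(G)`). -/
theorem powerful_pGroup_isJGroup {G : Type*} [Group G] [Fintype G] (p : ℕ)
    (hp : p.Prime) (hodd : Odd p) (hG : IsPGroup p G)
    (hpow : commutator G ≤ Subgroup.closure (Set.range fun g : G => g ^ p)) :
    (∃ k : G, IsWitness k) ∧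
      ∀ k : G, orderOf k = Monoid.exponent G → IsWitness k := by
  have := Fact.mk hp
  have := hG.isNilpotent
  obtain ⟨m, hm⟩ := hG.exists_exponent_eq_pow
  exact powerful_pGroup_isJGroup_general hp hodd hm hpow
end
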